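/- arXiv:2107.08281 — 2 statements merged into one kernel-verified Lean document; each statement's English description precedes it below -/
import Mathlib

section
/- Under assumptions (A1)–(A3) with τμ − ξ > 0 and H∘B convex, after k iterations of C-FISTA one has F(x^k) − F(x*) ≤ (1 − √((τμ−ξ)(rL−ξ))/(rL))^k · ( F(x⁰) − F(x*) + ((τμ−ξ)/2)‖z⁰ − x*‖² ); that is, C-FISTA converges globally linearly. -/
open scoped RealInnerProductSpace

/-!
C-FISTA is an accelerated proximal gradient method for `f + R` with `f = H ∘ B`. The convexity of
`H ∘ B` is quantified by linearizing `B`: composing the quadratic bounds `μ`, `L` of `H` with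
`√τ ‖x - y‖ ≤ ‖B x - B y‖ ≤ √r ‖x - y‖` gives moduli `τ μ` and `r L`, and the curvature of `B`,
controlled by (A3), costs at most `ξ` on each side. So `f` has quadratic bounds `m = τ μ - ξ` and
`M = r L + ξ` on the span of `X`.

The proximal parameter `c = r L` is smaller than `M`, but the strongly convex subproblem gains
`(c / 2) ‖w - x⁺‖ ^ 2`, and this leaves `2 c - M = r L - ξ > 0` in front of `‖x⁺ - y‖ ^ 2 / 2`.
Weighting the resulting inequalities at `w = x` and `w = s` by `1 - θ` and `θ` makes
`f x + R x - (f s + R s) + (m / 2) ‖z - s‖ ^ 2` contract by the factor `1 - θ`; the cross terms and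
the terms in `‖x⁺ - y‖ ^ 2` cancel precisely when `m α = θ c` and `m α ^ 2 = 2 c - M`.
-/

section QuadraticBounds

variable {E : Type*} [NormedAddCommGroup E]

theorem le_add_fderiv_add_sq_norm_sub [NormedSpace ℝ E] {f : E → ℝ} (hf : Differentiable ℝ f)
    {c : ℝ} {v w : E}
    (h : ∀ u ∈ segment ℝ v w, (fderiv ℝ f u - fderiv ℝ f v) (u - v) ≤ c * ‖u - v‖ ^ 2) :
    f w ≤ f v + fderiv ℝ f v (w - v) + c / 2 * ‖w - v‖ ^ 2 := by
  set d : E := w - v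
  have hpath (t : ℝ) : HasDerivAt (fun t : ℝ ↦ f (v + t • d)) (fderiv ℝ f (v + t • d) d) t := by
    have hline : HasDerivAt (fun t : ℝ ↦ v + t • d) d t := by
      simpa using ((hasDerivAt_id t).smul_const d).const_add v
    exact (hf _).hasFDerivAt.comp_hasDerivAt t hline
  have hquad (t : ℝ) :
      HasDerivAt (fun t : ℝ ↦ f v + t * fderiv ℝ f v d + c / 2 * ‖d‖ ^ 2 * t ^ 2)
        (fderiv ℝ f v d + c * ‖d‖ ^ 2 * t) t := by
    refine ((((hasDerivAt_id t).mul_const (fderiv ℝ f v d)).const_add (f v)).add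
      (((hasDerivAt_id t).pow 2).const_mul (c / 2 * ‖d‖ ^ 2))).congr_deriv ?_
    simp only [id_eq, Nat.cast_ofNat, Nat.add_one_sub_one, pow_one, one_mul, mul_one]
    ring
  have hderiv_le : ∀ t ∈ Set.Ico (0 : ℝ) 1,
      fderiv ℝ f (v + t • d) d ≤ fderiv ℝ f v d + c * ‖d‖ ^ 2 * t := by
    rintro t ⟨ht0, ht1⟩
    rcases ht0.eq_or_lt with rfl | ht0
    · simp
    have hmem : v + t • d ∈ segment ℝ v w := by
      rw [segment_eq_image']
      exact ⟨t, ⟨ht0.le, ht1.le⟩, rfl⟩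
    have hcurv := h _ hmem
    rw [add_sub_cancel_left, map_smul, smul_eq_mul, norm_smul, mul_pow, Real.norm_eq_abs,
      sq_abs, sub_apply] at hcurv
    refine le_of_mul_le_mul_left ?_ ht0
    linarith
  have hle := image_le_of_deriv_right_le_deriv_boundary (a := 0) (b := 1)
    (fun t _ ↦ (hpath t).continuousAt.continuousWithinAt) (fun t _ ↦ (hpath t).hasDerivWithinAt)
    (by simp) (fun t _ ↦ (hquad t).continuousAt.continuousWithinAt)
    (fun t _ ↦ (hquad t).hasDerivWithinAt) hderiv_le (Set.right_mem_Icc.2 zero_le_one)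
  simpa [d] using hle

variable [InnerProductSpace ℝ E] {V : Type*} [NormedAddCommGroup V] [InnerProductSpace ℝ V]

theorem abs_inner_sub_sub_fderiv_le {B : E → V} (hB : Differentiable ℝ B) {a : V} {ξ : ℝ} {v w : E}
    (h : ∀ u ∈ segment ℝ v w,
      |⟪a, (fderiv ℝ B u - fderiv ℝ B v) (u - v)⟫| ≤ ξ * ‖u - v‖ ^ 2) :
    |⟪a, B w - B v - fderiv ℝ B v (w - v)⟫| ≤ ξ / 2 * ‖w - v‖ ^ 2 := by
  have hinner (b : V) (u : E) :
      fderiv ℝ (fun p ↦ ⟪b, B p⟫) u = (innerSL ℝ b).comp (fderiv ℝ B u) :=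
    ((innerSL ℝ b).hasFDerivAt.comp u (hB u).hasFDerivAt).fderiv
  have honeSided (b : V) (hb : ∀ u ∈ segment ℝ v w,
      ⟪b, (fderiv ℝ B u - fderiv ℝ B v) (u - v)⟫ ≤ ξ * ‖u - v‖ ^ 2) :
      ⟪b, B w - B v - fderiv ℝ B v (w - v)⟫ ≤ ξ / 2 * ‖w - v‖ ^ 2 := by
    have hle := le_add_fderiv_add_sq_norm_sub (f := fun p ↦ ⟪b, B p⟫)
      (fun u ↦ (differentiableAt_const b).inner ℝ (hB u)) (c := ξ) (v := v) (w := w) fun u hu ↦ by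
        simpa [hinner, inner_sub_right] using hb u hu
    simp only [hinner, ContinuousLinearMap.comp_apply, innerSL_apply_apply] at hle
    rw [inner_sub_right, inner_sub_right]
    linarith
  refine abs_le'.2 ⟨honeSided a fun u hu ↦ (le_abs_self _).trans (h u hu), ?_⟩
  rw [← inner_neg_left]
  refine honeSided (-a) fun u hu ↦ ?_
  rw [inner_neg_left]
  exact (neg_le_abs _).trans (h u hu)

variable [CompleteSpace E] [CompleteSpace V]

theorem inner_gradient_comp {H : V → ℝ} {B : E → V} {v : E} (hH : DifferentiableAt ℝ H (B v))
    (hB : DifferentiableAt ℝ B v) (d : E) :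
    ⟪gradient (H ∘ B) v, d⟫ = ⟪gradient H (B v), fderiv ℝ B v d⟫ := by
  rw [inner_gradient_left, inner_gradient_left, fderiv_comp v hH hB,
    ContinuousLinearMap.comp_apply]

/-- On `S`, the function `f` lies between the two quadratic models with curvatures `m` and `M` built
on its linearization at any point of `S`. With `m > 0` this is first-order strong convexity together
with the conclusion of the descent lemma. -/
structure HasQuadraticBoundsOn (f : E → ℝ) (m M : ℝ) (S : Set E) : Prop where
  lower : ∀ v ∈ S, ∀ w ∈ S, f v + ⟪gradient f v, w - v⟫ + m / 2 * ‖w - v‖ ^ 2 ≤ f w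
  upper : ∀ v ∈ S, ∀ w ∈ S, f w ≤ f v + ⟪gradient f v, w - v⟫ + M / 2 * ‖w - v‖ ^ 2

theorem le_add_inner_gradient_add_sq_norm_sub {f : E → ℝ} (hf : Differentiable ℝ f) {L : ℝ}
    (hL : ∀ u v, ‖gradient f u - gradient f v‖ ≤ L * ‖u - v‖) (v w : E) :
    f w ≤ f v + ⟪gradient f v, w - v⟫ + L / 2 * ‖w - v‖ ^ 2 := by
  rw [inner_gradient_left]
  refine le_add_fderiv_add_sq_norm_sub hf fun u _ ↦ ?_
  calc (fderiv ℝ f u - fderiv ℝ f v) (u - v)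
      = ⟪gradient f u - gradient f v, u - v⟫ := by
        rw [inner_sub_left, inner_gradient_left, inner_gradient_left, sub_apply]
    _ ≤ ‖gradient f u - gradient f v‖ * ‖u - v‖ := real_inner_le_norm _ _
    _ ≤ L * ‖u - v‖ * ‖u - v‖ := by gcongr; exact hL u v
    _ = L * ‖u - v‖ ^ 2 := by ring

namespace HasQuadraticBoundsOn

theorem of_lipschitz_gradient {f : E → ℝ} (hf : Differentiable ℝ f) {m L : ℝ}
    (hm : ∀ v w, f v + ⟪gradient f v, w - v⟫ + m / 2 * ‖w - v‖ ^ 2 ≤ f w)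
    (hL : ∀ u v, ‖gradient f u - gradient f v‖ ≤ L * ‖u - v‖) (S : Set E) :
    HasQuadraticBoundsOn f m L S where
  lower v _ w _ := hm v w
  upper v _ w _ := le_add_inner_gradient_add_sq_norm_sub hf hL v w

theorem mul_sq_norm_sub_le {f : E → ℝ} {m M : ℝ} {S : Set E} (hf : HasQuadraticBoundsOn f m M S)
    {v w : E} (hv : v ∈ S) (hw : w ∈ S) : m * ‖w - v‖ ^ 2 ≤ M * ‖w - v‖ ^ 2 := by
  linarith [hf.lower v hv w hw, hf.upper v hv w hw]

variable {H : V → ℝ} {B : E → V} {μ L τ r ξ : ℝ} {S : Set E}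

theorem comp (hH : HasQuadraticBoundsOn H μ L (B '' S)) (hHdiff : Differentiable ℝ H)
    (hμ : 0 ≤ μ) (hL : 0 ≤ L) (hB : Differentiable ℝ B) (hS : Convex ℝ S)
    (hτ : ∀ v ∈ S, ∀ w ∈ S, τ * ‖v - w‖ ^ 2 ≤ ‖B v - B w‖ ^ 2)
    (hr : ∀ v ∈ S, ∀ w ∈ S, ‖B v - B w‖ ^ 2 ≤ r * ‖v - w‖ ^ 2)
    (hξ : ∀ v ∈ S, ∀ w ∈ S,
      |⟪gradient H (B v), (fderiv ℝ B w - fderiv ℝ B v) (w - v)⟫| ≤ ξ * ‖w - v‖ ^ 2) :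
    HasQuadraticBoundsOn (H ∘ B) (τ * μ - ξ) (r * L + ξ) S := by
  have hlin (v : E) (hv : v ∈ S) (w : E) (hw : w ∈ S) :
      |⟪gradient H (B v), B w - B v⟫ - ⟪gradient (H ∘ B) v, w - v⟫| ≤ ξ / 2 * ‖w - v‖ ^ 2 := by
    rw [inner_gradient_comp (hHdiff _) (hB v), ← inner_sub_right]
    exact abs_inner_sub_sub_fderiv_le hB fun u hu ↦ hξ v hv u (hS.segment_subset hv hw hu)
  constructor
  · intro v hv w hw
    have hlower := hH.lower _ (Set.mem_image_of_mem B hv) _ (Set.mem_image_of_mem B hw)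
    have hmod := mul_le_mul_of_nonneg_left (hτ w hw v hv) hμ
    simp only [Function.comp_apply]
    linarith [(abs_le.1 (hlin v hv w hw)).1]
  · intro v hv w hw
    have hupper := hH.upper _ (Set.mem_image_of_mem B hv) _ (Set.mem_image_of_mem B hw)
    have hmod := mul_le_mul_of_nonneg_left (hr w hw v hv) hL
    simp only [Function.comp_apply]
    linarith [(abs_le.1 (hlin v hv w hw)).2]

end HasQuadraticBoundsOn

end QuadraticBounds

theorem HasQuadraticBoundsOn.mul_le_mul_of_nontrivial {E V : Type*} [NormedAddCommGroup E]
    [NormedAddCommGroup V] [InnerProductSpace ℝ V] [CompleteSpace V]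
    {H : V → ℝ} {B : E → V} {μ L τ r : ℝ} {S : Set E} (hH : HasQuadraticBoundsOn H μ L (B '' S))
    (hμ : 0 ≤ μ) (hL : 0 ≤ L) (hS : S.Nontrivial)
    (hτ : ∀ v ∈ S, ∀ w ∈ S, τ * ‖v - w‖ ^ 2 ≤ ‖B v - B w‖ ^ 2)
    (hr : ∀ v ∈ S, ∀ w ∈ S, ‖B v - B w‖ ^ 2 ≤ r * ‖v - w‖ ^ 2) : τ * μ ≤ r * L := by
  obtain ⟨v, hv, w, hw, hvw⟩ := hS
  have hpos : 0 < ‖v - w‖ := norm_sub_pos_iff.2 hvw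
  refine le_of_mul_le_mul_right ?_ (pow_pos hpos 2)
  calc τ * μ * ‖v - w‖ ^ 2 = μ * (τ * ‖v - w‖ ^ 2) := by ring
    _ ≤ μ * ‖B v - B w‖ ^ 2 := by gcongr; exact hτ v hv w hw
    _ ≤ L * ‖B v - B w‖ ^ 2 :=
      hH.mul_sq_norm_sub_le (Set.mem_image_of_mem B hw) (Set.mem_image_of_mem B hv)
    _ ≤ L * (r * ‖v - w‖ ^ 2) := by gcongr; exact hr v hv w hw
    _ = r * L * ‖v - w‖ ^ 2 := by ring

theorem sq_norm_le_sum_sq_mul_sq_of_norm_le {𝕜 ι : Type*} [RCLike 𝕜] [Fintype ι]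
    {u : EuclideanSpace 𝕜 ι} {K : ι → ℝ} {c : ℝ} (h : ∀ i, ‖u i‖ ≤ K i * c) :
    ‖u‖ ^ 2 ≤ (∑ i, K i ^ 2) * c ^ 2 := by
  rw [EuclideanSpace.norm_sq_eq, Finset.sum_mul]
  refine Finset.sum_le_sum fun i _ ↦ ?_
  rw [← mul_pow]
  exact pow_le_pow_left₀ (norm_nonneg _) (h i) 2

section ProximalStep

open Filter Topology

variable {E : Type*} [NormedAddCommGroup E]

theorem add_modulus_le_of_isMinOn [NormedSpace ℝ E] {S : Set E} {φ : ℝ → ℝ} {f : E → ℝ}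
    (hf : UniformConvexOn S φ f) {p w : E} (hmin : IsMinOn f S p) (hp : p ∈ S) (hw : w ∈ S) :
    f p + φ ‖p - w‖ ≤ f w := by
  have hscaled : ∀ t ∈ Set.Ioo (0 : ℝ) 1, f p + (1 - t) * φ ‖p - w‖ ≤ f w := by
    rintro t ⟨ht0, ht1⟩
    have h1t : 0 ≤ 1 - t := by linarith
    have hmem : (1 - t) • p + t • w ∈ S := hf.1 hp hw h1t ht0.le (sub_add_cancel 1 t)
    have hconv := (hmin hmem).trans (hf.2 hp hw h1t ht0.le (sub_add_cancel 1 t))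
    simp only [smul_eq_mul] at hconv
    refine le_of_mul_le_mul_left ?_ ht0
    linarith
  have hlim : Tendsto (fun t : ℝ ↦ f p + (1 - t) * φ ‖p - w‖) (𝓝[>] 0)
      (𝓝 (f p + (1 - 0) * φ ‖p - w‖)) :=
    (Continuous.tendsto (by fun_prop) 0).mono_left nhdsWithin_le_nhds
  rw [sub_zero, one_mul] at hlim
  exact le_of_tendsto hlim (mem_of_superset (Ioo_mem_nhdsGT one_pos) hscaled)

variable [InnerProductSpace ℝ E]

theorem strongConvexOn_add_inner_add_sq_norm_sub_add {X : Set E} {R : E → ℝ} (hR : ConvexOn ℝ X R)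
    (b c : ℝ) (g y : E) :
    StrongConvexOn X c fun w ↦ b + ⟪g, w - y⟫ + c / 2 * ‖w - y‖ ^ 2 + R w := by
  rw [strongConvexOn_iff_convex]
  have haffine : ConvexOn ℝ X fun w ↦ ⟪g - c • y, w⟫ + (b + c / 2 * ‖y‖ ^ 2 - ⟪g, y⟫) :=
    ((innerSL ℝ (g - c • y)).toLinearMap.convexOn hR.1).add_const _
  refine (haffine.add hR).congr fun w _ ↦ ?_
  simp only [Pi.add_apply, norm_sub_sq_real, inner_sub_left, inner_sub_right,
    real_inner_smul_left, real_inner_comm w y]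
  ring

theorem add_le_of_isMinOn_proximal [CompleteSpace E] {f R : E → ℝ} {m M c : ℝ} {S X : Set E}
    (hf : HasQuadraticBoundsOn f m M S) (hXS : X ⊆ S) (hR : ConvexOn ℝ X R) {y p w : E}
    (hy : y ∈ S) (hp : p ∈ X) (hw : w ∈ X)
    (hmin : IsMinOn (fun w ↦ f y + ⟪gradient f y, w - y⟫ + c / 2 * ‖w - y‖ ^ 2 + R w) X p) :
    f p + R p + m / 2 * ‖w - y‖ ^ 2 + c * ⟪p - y, y - w⟫ + (2 * c - M) / 2 * ‖p - y‖ ^ 2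
      ≤ f w + R w := by
  have hlower := hf.lower y hy w (hXS hw)
  have hupper := hf.upper y hy p (hXS hp)
  have hprox := add_modulus_le_of_isMinOn
    (strongConvexOn_add_inner_add_sq_norm_sub_add hR (f y) c (gradient f y) y) hmin hp hw
  have hexpand : ‖p - w‖ ^ 2 = ‖p - y‖ ^ 2 + 2 * ⟪p - y, y - w⟫ + ‖w - y‖ ^ 2 := by
    rw [← sub_add_sub_cancel p y w, norm_add_sq_real, norm_sub_rev y w]
  simp only [hexpand] at hprox
  linarith

end ProximalStep

section CFISTA

variable {E : Type*} [NormedAddCommGroup E] [InnerProductSpace ℝ E]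

/-- The potential of a C-FISTA state `(x, z)` relative to the comparison point `s`, where `F` is the
objective and `m` its lower curvature. -/
noncomputable def cfistaLyapunov (F : E → ℝ) (m : ℝ) (s x z : E) : ℝ :=
  F x - F s + m / 2 * ‖z - s‖ ^ 2

theorem smul_extrapolation_eq {θ : ℝ} (hθ : 1 + θ ≠ 0) {x y z : E}
    (hy : y = (1 / (1 + θ)) • x + (θ / (1 + θ)) • z) (s : E) :
    θ • ((1 - θ) • (z - s) + θ • (y - s)) = (1 - θ) • (y - x) + θ • (y - s) := by
  have hx : x = (1 + θ) • y - θ • z := by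
    rw [hy, smul_add, smul_smul, smul_smul, mul_one_div_cancel hθ, mul_div_cancel₀ _ hθ]
    module
  rw [hx]
  module

theorem cfistaLyapunov_step_le {F : E → ℝ} {m c a θ α : ℝ} {x y z s p : E} (hm : 0 ≤ m)
    (hθ0 : 0 ≤ θ) (hθ1 : θ ≤ 1) (hα : m * α = θ * c) (hα_sq : m * α ^ 2 = a)
    (hy : y = (1 / (1 + θ)) • x + (θ / (1 + θ)) • z)
    (hx : F p + m / 2 * ‖x - y‖ ^ 2 + c * ⟪p - y, y - x⟫ + a / 2 * ‖p - y‖ ^ 2 ≤ F x)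
    (hs : F p + m / 2 * ‖s - y‖ ^ 2 + c * ⟪p - y, y - s⟫ + a / 2 * ‖p - y‖ ^ 2 ≤ F s) :
    cfistaLyapunov F m s p ((1 - θ) • z + θ • y + α • (p - y))
      ≤ (1 - θ) * cfistaLyapunov F m s x z := by
  have h1θ : 0 ≤ 1 - θ := by linarith
  set u : E := (1 - θ) • (z - s) + θ • (y - s) with hu
  have hnorm_u : ‖u‖ ^ 2 ≤ (1 - θ) * ‖z - s‖ ^ 2 + θ * ‖s - y‖ ^ 2 := by
    rw [norm_sub_rev s y]
    exact ((convexOn_norm convex_univ).pow (fun v _ ↦ norm_nonneg v) 2).2 (Set.mem_univ _)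
      (Set.mem_univ _) h1θ hθ0 (sub_add_cancel 1 θ)
  have hinner : m * α * ⟪p - y, u⟫
      = c * ((1 - θ) * ⟪p - y, y - x⟫ + θ * ⟪p - y, y - s⟫) := by
    calc m * α * ⟪p - y, u⟫ = c * ⟪p - y, θ • u⟫ := by rw [hα, real_inner_smul_right]; ring
      _ = c * ((1 - θ) * ⟪p - y, y - x⟫ + θ * ⟪p - y, y - s⟫) := by
        rw [smul_extrapolation_eq (by positivity) hy, inner_add_right, real_inner_smul_right,
          real_inner_smul_right]
  have hexpand : ‖(1 - θ) • z + θ • y + α • (p - y) - s‖ ^ 2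
      = ‖u‖ ^ 2 + 2 * (α * ⟪p - y, u⟫) + α ^ 2 * ‖p - y‖ ^ 2 := by
    have hsplit : (1 - θ) • z + θ • y + α • (p - y) - s = u + α • (p - y) := by
      rw [hu]; module
    rw [hsplit, norm_add_sq_real, real_inner_smul_right, real_inner_comm u, norm_smul, mul_pow,
      Real.norm_eq_abs, sq_abs]
  have hdrop : 0 ≤ (1 - θ) * (m / 2 * ‖x - y‖ ^ 2) := by positivity
  subst hα_sq
  unfold cfistaLyapunov
  rw [hexpand]
  linarith [mul_le_mul_of_nonneg_left hnorm_u (by positivity : 0 ≤ m / 2),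
    mul_le_mul_of_nonneg_left hx h1θ, mul_le_mul_of_nonneg_left hs hθ0]

/-- `x`, `z`, `y` are the C-FISTA iterates for minimizing `f + R` over `X`, with proximal parameter
`c` and momentum parameters `θ` and `α`. The method of the paper is the case `f = H ∘ B`,
`c = r * L`. -/
structure IsCFISTA [CompleteSpace E] (X : Set E) (f R : E → ℝ) (c θ α : ℝ) (x z y : ℕ → E) :
    Prop where
  x_mem : ∀ k, x k ∈ X
  z_zero_mem : z 0 ∈ X
  y_eq : ∀ k, y k = (1 / (1 + θ)) • x k + (θ / (1 + θ)) • z k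
  isMinOn : ∀ k, IsMinOn
    (fun w ↦ f (y k) + ⟪gradient f (y k), w - y k⟫ + c / 2 * ‖w - y k‖ ^ 2 + R w) X (x (k + 1))
  z_succ : ∀ k, z (k + 1) = (1 - θ) • z k + θ • y k + α • (x (k + 1) - y k)

namespace IsCFISTA

variable [CompleteSpace E] {X : Set E} {f R : E → ℝ} {c θ α : ℝ} {x z y : ℕ → E}

theorem y_mem_of_z_mem (h : IsCFISTA X f R c θ α x z y) {S : Submodule ℝ E} (hXS : X ⊆ S) {k : ℕ}
    (hz : z k ∈ S) : y k ∈ S := by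
  rw [h.y_eq]
  exact S.add_mem (S.smul_mem _ (hXS (h.x_mem k))) (S.smul_mem _ hz)

theorem z_mem (h : IsCFISTA X f R c θ α x z y) {S : Submodule ℝ E} (hXS : X ⊆ S) (k : ℕ) :
    z k ∈ S := by
  induction k with
  | zero => exact hXS h.z_zero_mem
  | succ k hz =>
    have hy := h.y_mem_of_z_mem hXS hz
    rw [h.z_succ]
    exact S.add_mem (S.add_mem (S.smul_mem _ hz) (S.smul_mem _ hy))
      (S.smul_mem _ (S.sub_mem (hXS (h.x_mem (k + 1))) hy))

theorem sub_le_pow_mul_cfistaLyapunov (h : IsCFISTA X f R c θ α x z y) {S : Submodule ℝ E}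
    (hXS : X ⊆ S) {m M : ℝ} (hf : HasQuadraticBoundsOn f m M S) (hR : ConvexOn ℝ X R) (hm : 0 ≤ m)
    (hθ0 : 0 ≤ θ) (hθ1 : θ ≤ 1) (hα : m * α = θ * c) (hα_sq : m * α ^ 2 = 2 * c - M) {s : E}
    (hs : s ∈ X) (k : ℕ) :
    (f + R) (x k) - (f + R) s ≤ (1 - θ) ^ k * cfistaLyapunov (f + R) m s (x 0) (z 0) := by
  have hstep (k : ℕ) : cfistaLyapunov (f + R) m s (x (k + 1)) (z (k + 1))
      ≤ (1 - θ) * cfistaLyapunov (f + R) m s (x k) (z k) := by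
    have hprox (w : E) (hw : w ∈ X) := add_le_of_isMinOn_proximal hf hXS hR
      (h.y_mem_of_z_mem hXS (h.z_mem hXS k)) (h.x_mem (k + 1)) hw (h.isMinOn k)
    rw [h.z_succ]
    exact cfistaLyapunov_step_le hm hθ0 hθ1 hα hα_sq (h.y_eq k) (hprox _ (h.x_mem k)) (hprox s hs)
  calc (f + R) (x k) - (f + R) s ≤ cfistaLyapunov (f + R) m s (x k) (z k) :=
        le_add_of_nonneg_right (by positivity)
    _ ≤ (1 - θ) ^ k * cfistaLyapunov (f + R) m s (x 0) (z 0) :=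
        le_geom (u := fun k ↦ cfistaLyapunov (f + R) m s (x k) (z k)) (sub_nonneg.2 hθ1) k
          fun j _ ↦ hstep j

end IsCFISTA

theorem sqrt_mul_div_le_one {m a c : ℝ} (hma : 0 ≤ m + a) (hc : m + a ≤ 2 * c) :
    Real.sqrt (m * a) / c ≤ 1 := by
  have hc0 : 0 ≤ c := by linarith
  refine div_le_one_of_le₀ (Real.sqrt_le_iff.2 ⟨hc0, ?_⟩) hc0
  linarith [four_mul_le_sq_add m a, pow_le_pow_left₀ hma hc 2]

theorem mul_sqrt_div_eq_sqrt_mul {m : ℝ} (hm : 0 ≤ m) (a : ℝ) :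
    m * Real.sqrt (a / m) = Real.sqrt (m * a) := by
  rw [Real.sqrt_div' _ hm, Real.sqrt_mul hm, mul_div_left_comm, Real.div_sqrt, mul_comm]

theorem cfista_global_linear_convergence_general {V : Type*} [NormedAddCommGroup V]
    [InnerProductSpace ℝ V] [CompleteSpace E] [CompleteSpace V] {X : Set E} {H : V → ℝ} {B : E → V}
    {R : E → ℝ} {μ L τ r ξ : ℝ} {x z y : ℕ → E} (hHdiff : Differentiable ℝ H)
    (hμ : 0 ≤ μ) (hL : 0 ≤ L)
    (hH : HasQuadraticBoundsOn H μ L (B '' (Submodule.span ℝ X : Set E)))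
    (hB : Differentiable ℝ B)
    (hr : ∀ v ∈ Submodule.span ℝ X, ∀ w ∈ Submodule.span ℝ X,
      ‖B v - B w‖ ^ 2 ≤ r * ‖v - w‖ ^ 2)
    (hτ : ∀ v ∈ Submodule.span ℝ X, ∀ w ∈ Submodule.span ℝ X,
      τ * ‖v - w‖ ^ 2 ≤ ‖B v - B w‖ ^ 2)
    (hξ0 : 0 ≤ ξ)
    (hξ : ∀ v ∈ Submodule.span ℝ X, ∀ w ∈ Submodule.span ℝ X,
      |⟪gradient H (B v), (fderiv ℝ B w - fderiv ℝ B v) (w - v)⟫| ≤ ξ * ‖w - v‖ ^ 2)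
    (hR : ConvexOn ℝ X R) (hgap : 0 < τ * μ - ξ)
    (hiter : IsCFISTA X (H ∘ B) R (r * L)
      (Real.sqrt ((τ * μ - ξ) * (r * L - ξ)) / (r * L))
      (Real.sqrt ((r * L - ξ) / (τ * μ - ξ))) x z y)
    {s : E} (hs : s ∈ X) (k : ℕ) :
    (H ∘ B + R) (x k) - (H ∘ B + R) s
      ≤ (1 - Real.sqrt ((τ * μ - ξ) * (r * L - ξ)) / (r * L)) ^ k
        * cfistaLyapunov (H ∘ B + R) (τ * μ - ξ) s (x 0) (z 0) := by
  have hXS : X ⊆ Submodule.span ℝ X := Submodule.subset_span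
  rcases (Submodule.span ℝ X : Set E).subsingleton_or_nontrivial with htriv | hnontriv
  · have heq {v : E} (hv : v ∈ X) : v = s := htriv (hXS hv) (hXS hs)
    simp [cfistaLyapunov, heq (hiter.x_mem k), heq (hiter.x_mem 0), heq hiter.z_zero_mem]
  have hmoduli : τ * μ ≤ r * L := hH.mul_le_mul_of_nontrivial hμ hL hnontriv hτ hr
  have hbounds := hH.comp hHdiff hμ hL hB (Submodule.span ℝ X).convex hτ hr hξ
  have hc : 0 < r * L := by linarith
  have ha : 0 ≤ r * L - ξ := by linarith
  refine hiter.sub_le_pow_mul_cfistaLyapunov hXS hbounds hR hgap.le (by positivity)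
    (sqrt_mul_div_le_one (by linarith) (by linarith)) ?_ ?_ hs k
  · rw [mul_sqrt_div_eq_sqrt_mul hgap.le, div_mul_cancel₀ _ hc.ne']
  · rw [Real.sq_sqrt (by positivity), mul_div_cancel₀ _ hgap.ne']
    ring

end CFISTA

/-- Theorem 2.1 (one-step contraction of C-FISTA): under assumptions (A1)-(A3)
with `τ * μ - ξ > 0` and `H ∘ B` convex, each iteration of C-FISTA contracts the
Lyapunov quantity `F(x^k) - F(x*) + ((τμ-ξ)/2)‖z^k - x*‖²` by the factor
`1 - √((τμ-ξ)(rL-ξ))/(rL)`. -/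
theorem cfista_global_linear_convergence
    {n m : ℕ}
    (X : Set (EuclideanSpace ℝ (Fin n)))
    (hXclosed : IsClosed X) (hXconvex : Convex ℝ X)
    (H : EuclideanSpace ℝ (Fin m) → ℝ)
    (hHdiff : Differentiable ℝ H)
    (μ L : ℝ) (hμ : 0 < μ) (hL : 0 < L)
    -- strong convexity of H with parameter μ
    (hHsc : ∀ u v, H v ≥ H u + ⟪gradient H u, v - u⟫ + μ / 2 * ‖v - u‖ ^ 2)
    -- L-Lipschitz gradient of H
    (hHlip : ∀ u v, ‖gradient H u - gradient H v‖ ≤ L * ‖u - v‖)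
    (B : EuclideanSpace ℝ (Fin n) → EuclideanSpace ℝ (Fin m))
    (Lbar : Fin m → ℝ) (hLbar : ∀ i, 0 ≤ Lbar i)
    -- (A1): each component of B is C², convex, and Lipschitz with constant L̄ᵢ
    (hA1smooth : ∀ i, ContDiff ℝ 2 (fun x => B x i))
    (hA1convex : ∀ i, ConvexOn ℝ Set.univ (fun x => B x i))
    (hA1lip : ∀ i, ∀ x y, |B x i - B y i| ≤ Lbar i * ‖x - y‖)
    (r : ℝ) (hr : r = ∑ i, Lbar i ^ 2)
    -- (A2)
    (τ : ℝ) (hτ : 0 < τ)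
    (hA2 : ∀ x ∈ Submodule.span ℝ X, ∀ y ∈ Submodule.span ℝ X,
      τ * ‖x - y‖ ^ 2 ≤ ‖B x - B y‖ ^ 2)
    -- (A3)
    (ξ : ℝ) (hξ : 0 ≤ ξ)
    (hA3 : ∀ x' ∈ Submodule.span ℝ X, ∀ x'' ∈ Submodule.span ℝ X,
      |⟪gradient H (B x'), (fderiv ℝ B x'' - fderiv ℝ B x') (x'' - x')⟫|
        ≤ ξ * ‖x'' - x'‖ ^ 2)
    (R : EuclideanSpace ℝ (Fin n) → ℝ) (hR : ConvexOn ℝ Set.univ R)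
    (F : EuclideanSpace ℝ (Fin n) → ℝ) (hF : ∀ x, F x = H (B x) + R x)
    (hHB : ConvexOn ℝ Set.univ (fun x => H (B x)))
    (hgap : 0 < τ * μ - ξ)
    (xstar : EuclideanSpace ℝ (Fin n)) (hxstarX : xstar ∈ X)
    (hxstar : ∀ w ∈ X, F xstar ≤ F w)
    (θ α : ℝ)
    (hθ : θ = Real.sqrt ((τ * μ - ξ) * (r * L - ξ)) / (r * L))
    (hα : α = Real.sqrt ((r * L - ξ) / (τ * μ - ξ)))
    (x z y : ℕ → EuclideanSpace ℝ (Fin n))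
    (hx0 : x 0 ∈ X) (hz0 : z 0 ∈ X)
    (hy : ∀ k, y k = (1 / (1 + θ)) • x k + (θ / (1 + θ)) • z k)
    -- x^{k+1} minimizes the proximal subproblem over X
    (hxmem : ∀ k, x (k + 1) ∈ X)
    (hxmin : ∀ k, ∀ w ∈ X,
      H (B (y k)) + ⟪gradient (fun v => H (B v)) (y k), x (k + 1) - y k⟫
          + r * L / 2 * ‖x (k + 1) - y k‖ ^ 2 + R (x (k + 1))
        ≤ H (B (y k)) + ⟪gradient (fun v => H (B v)) (y k), w - y k⟫
          + r * L / 2 * ‖w - y k‖ ^ 2 + R w)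
    (hz : ∀ k, z (k + 1) = (1 - θ) • z k + θ • y k + α • (x (k + 1) - y k)) :
    ∀ k : ℕ,
      F (x k) - F xstar
        ≤ (1 - Real.sqrt ((τ * μ - ξ) * (r * L - ξ)) / (r * L)) ^ k
          * (F (x 0) - F xstar + (τ * μ - ξ) / 2 * ‖z 0 - xstar‖ ^ 2) := by
  obtain rfl : F = H ∘ B + R := funext hF
  subst hθ hα hr
  have hB : Differentiable ℝ B :=
    differentiable_euclidean.2 fun i ↦ (hA1smooth i).differentiable two_ne_zero
  exact cfista_global_linear_convergence_general hHdiff hμ.le hL.le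
    (.of_lipschitz_gradient hHdiff hHsc hHlip _) hB
    (fun v _ w _ ↦ sq_norm_le_sum_sq_mul_sq_of_norm_le fun i ↦ hA1lip i v w) hA2 hξ hA3
    (hR.subset (Set.subset_univ X) hXconvex) hgap
    ⟨fun k ↦ k.casesOn hx0 hxmem, hz0, hy, hxmin, hz⟩ hxstarX
end

section
/- Suppose H : ℝᵐ → ℝ is differentiable with L-Lipschitz gradient, B : ℝⁿ → ℝᵐ is differentiable with each component B_i Lipschitz with constant L̄_i, r := L̄₁² + ⋯ + L̄_m², and assumption (A3) holds with constant ξ ≥ 0. Then for all y, x′ in span(X): H(B(x′)) ≤ H(B(y)) + ∇(H∘B)(y)ᵀ(x′ − y) + ((rL + ξ)/2)‖x′ − y‖². -/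
open scoped RealInnerProductSpace

/-!
Along the segment from `y` to `x`, it suffices that the derivative of `H ∘ B` is one-sidedly
Lipschitz with respect to the base point `y`: integrating such a bound gives the quadratic upper
model. For `z` on the segment, split `D(H ∘ B)(z) - D(H ∘ B)(y)`, applied to `z - y`, as
`(DH(B z) - DH(B y)) (DB(z) (z - y)) + DH(B y) ((DB(z) - DB(y)) (z - y))`. The first term is at most
`M² L ‖z - y‖²` if `B` is `M`-Lipschitz, and (A3) bounds the second by `ξ ‖z - y‖²`.
-/

section PiLp

variable {ι : Type*} [Fintype ι] {β : ι → Type*} [∀ i, SeminormedAddCommGroup (β i)]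

theorem piLp_norm_le_sqrt_sum_sq_mul {u : PiLp 2 β} {c : ι → ℝ} {t : ℝ} (ht : 0 ≤ t)
    (hu : ∀ i, ‖u i‖ ≤ c i * t) : ‖u‖ ≤ √(∑ i, c i ^ 2) * t := by
  calc ‖u‖ = √(∑ i, ‖u i‖ ^ 2) := PiLp.norm_eq_of_L2 u
    _ ≤ √(∑ i, (c i * t) ^ 2) := by gcongr with i; exact hu i
    _ = √(∑ i, c i ^ 2) * t := by
      simp only [mul_pow, ← Finset.sum_mul, Real.sqrt_mul' _ (sq_nonneg t), Real.sqrt_sq ht]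

end PiLp

section Gradient

variable {𝕜 F : Type*} [RCLike 𝕜] [NormedAddCommGroup F] [InnerProductSpace 𝕜 F] [CompleteSpace F]

theorem norm_gradient_sub_gradient (f : F → 𝕜) (x y : F) :
    ‖gradient f x - gradient f y‖ = ‖fderiv 𝕜 f x - fderiv 𝕜 f y‖ := by
  rw [← toDual_gradient, ← toDual_gradient, ← map_sub, LinearIsometryEquiv.norm_map]

end Gradient

section Descent

theorem le_add_mul_add_sq_of_deriv_le {φ φ' : ℝ → ℝ} {a b c K : ℝ} (hab : a ≤ b)
    (hφ : ∀ t ∈ Set.Icc a b, HasDerivAt φ (φ' t) t)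
    (hφ' : ∀ t ∈ Set.Icc a b, φ' t ≤ c + K * (t - a)) :
    φ b ≤ φ a + c * (b - a) + K / 2 * (b - a) ^ 2 := by
  let model (t : ℝ) : ℝ := φ a + c * (t - a) + K / 2 * (t - a) ^ 2
  have hasDerivAt_model (t : ℝ) : HasDerivAt model (c + K * (t - a)) t := by
    have hasDerivAt_sub : HasDerivAt (fun s ↦ s - a) 1 t := (hasDerivAt_id t).sub_const a
    refine (((hasDerivAt_sub.const_mul c).const_add (φ a)).add
      ((hasDerivAt_sub.pow 2).const_mul (K / 2))).congr_deriv ?_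
    ring
  exact image_le_of_deriv_right_le_deriv_boundary
    (fun t ht ↦ (hφ t ht).continuousAt.continuousWithinAt)
    (fun t ht ↦ (hφ t (Set.Ico_subset_Icc_self ht)).hasDerivWithinAt)
    (B := model) (by simp [model])
    (fun t _ ↦ (hasDerivAt_model t).continuousAt.continuousWithinAt)
    (fun t _ ↦ (hasDerivAt_model t).hasDerivWithinAt)
    (fun t ht ↦ hφ' t (Set.Ico_subset_Icc_self ht))
    (Set.right_mem_Icc.mpr hab)

variable {E F : Type*} [NormedAddCommGroup E] [NormedSpace ℝ E]
  [NormedAddCommGroup F] [NormedSpace ℝ F]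

theorem le_add_fderiv_add_sq_of_fderiv_sub_le {f : E → ℝ} {x y : E} {K : ℝ}
    (hf : ∀ z ∈ segment ℝ y x, DifferentiableAt ℝ f z)
    (hK : ∀ z ∈ segment ℝ y x, (fderiv ℝ f z - fderiv ℝ f y) (z - y) ≤ K * ‖z - y‖ ^ 2) :
    f x ≤ f y + fderiv ℝ f y (x - y) + K / 2 * ‖x - y‖ ^ 2 := by
  let γ : ℝ → E := AffineMap.lineMap y x
  have γ_mem {t : ℝ} (ht : t ∈ Set.Icc 0 1) : γ t ∈ segment ℝ y x :=
    segment_eq_image_lineMap ℝ y x ▸ Set.mem_image_of_mem _ ht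
  have γ_sub (t : ℝ) : γ t - y = t • (x - y) := by simp [γ, AffineMap.lineMap_apply]
  have hasDerivAt_f_γ (t : ℝ) (ht : t ∈ Set.Icc 0 1) :
      HasDerivAt (fun s ↦ f (γ s)) (fderiv ℝ f (γ t) (x - y)) t :=
    (hf _ (γ_mem ht)).hasFDerivAt.comp_hasDerivAt t AffineMap.hasDerivAt_lineMap
  have deriv_le (t : ℝ) (ht : t ∈ Set.Icc 0 1) :
      fderiv ℝ f (γ t) (x - y) ≤ fderiv ℝ f y (x - y) + K * ‖x - y‖ ^ 2 * (t - 0) := by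
    obtain rfl | ht₀ := ht.1.eq_or_lt
    · simp [γ]
    have hKt := hK _ (γ_mem ht)
    rw [γ_sub, map_smul, smul_eq_mul, norm_smul, Real.norm_of_nonneg ht.1] at hKt
    have sub_le : (fderiv ℝ f (γ t) - fderiv ℝ f y) (x - y) ≤ K * ‖x - y‖ ^ 2 * t :=
      le_of_mul_le_mul_left (hKt.trans_eq (by ring)) ht₀
    rw [sub_apply] at sub_le
    linarith
  have := le_add_mul_add_sq_of_deriv_le zero_le_one hasDerivAt_f_γ deriv_le
  simp only [γ, AffineMap.lineMap_apply_zero, AffineMap.lineMap_apply_one] at this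
  linarith

variable {H : F → ℝ} {B : E → F} {L M ξ : ℝ} {x y : E}

theorem fderiv_comp_sub_fderiv_comp_le (hH : Differentiable ℝ H) (hL : 0 ≤ L)
    (hHlip : ∀ u v, ‖fderiv ℝ H u - fderiv ℝ H v‖ ≤ L * ‖u - v‖)
    (hB : Differentiable ℝ B) (hM : 0 ≤ M) (hBlip : ∀ u v, ‖B u - B v‖ ≤ M * ‖u - v‖)
    (hA3 : fderiv ℝ H (B y) ((fderiv ℝ B x - fderiv ℝ B y) (x - y)) ≤ ξ * ‖x - y‖ ^ 2) :
    (fderiv ℝ (fun v ↦ H (B v)) x - fderiv ℝ (fun v ↦ H (B v)) y) (x - y) ≤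
      (M ^ 2 * L + ξ) * ‖x - y‖ ^ 2 := by
  have fderiv_comp_apply (z v : E) :
      fderiv ℝ (fun v ↦ H (B v)) z v = fderiv ℝ H (B z) (fderiv ℝ B z v) := by
    rw [fderiv_fun_comp z (hH (B z)) (hB z), ContinuousLinearMap.comp_apply]
  have norm_fderiv_B : ‖fderiv ℝ B x‖ ≤ M :=
    norm_fderiv_le_of_lip' ℝ hM (.of_forall fun z ↦ hBlip z x)
  have change_of_dH_le : (fderiv ℝ H (B x) - fderiv ℝ H (B y)) (fderiv ℝ B x (x - y)) ≤
      M ^ 2 * L * ‖x - y‖ ^ 2 :=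
    calc _ ≤ ‖fderiv ℝ H (B x) - fderiv ℝ H (B y)‖ * ‖fderiv ℝ B x (x - y)‖ :=
          (Real.le_norm_self _).trans (ContinuousLinearMap.le_opNorm _ _)
      _ ≤ L * (M * ‖x - y‖) * (M * ‖x - y‖) := by
          gcongr
          · exact (hHlip _ _).trans (by gcongr; exact hBlip x y)
          · exact ContinuousLinearMap.le_of_opNorm_le _ norm_fderiv_B _
      _ = M ^ 2 * L * ‖x - y‖ ^ 2 := by ring
  calc _ = (fderiv ℝ H (B x) - fderiv ℝ H (B y)) (fderiv ℝ B x (x - y)) +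
        fderiv ℝ H (B y) ((fderiv ℝ B x - fderiv ℝ B y) (x - y)) := by
        simp only [sub_apply, fderiv_comp_apply, map_sub]
        abel
    _ ≤ M ^ 2 * L * ‖x - y‖ ^ 2 + ξ * ‖x - y‖ ^ 2 := add_le_add change_of_dH_le hA3
    _ = (M ^ 2 * L + ξ) * ‖x - y‖ ^ 2 := by ring

theorem generalized_descent_inequality_general (hH : Differentiable ℝ H) (hL : 0 ≤ L)
    (hHlip : ∀ u v, ‖fderiv ℝ H u - fderiv ℝ H v‖ ≤ L * ‖u - v‖)
    (hB : Differentiable ℝ B) (hM : 0 ≤ M) (hBlip : ∀ u v, ‖B u - B v‖ ≤ M * ‖u - v‖)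
    (hA3 : ∀ z ∈ segment ℝ y x,
      fderiv ℝ H (B y) ((fderiv ℝ B z - fderiv ℝ B y) (z - y)) ≤ ξ * ‖z - y‖ ^ 2) :
    H (B x) ≤ H (B y) + fderiv ℝ (fun v ↦ H (B v)) y (x - y) +
      (M ^ 2 * L + ξ) / 2 * ‖x - y‖ ^ 2 :=
  le_add_fderiv_add_sq_of_fderiv_sub_le (f := fun v ↦ H (B v)) (fun z _ ↦ hH.comp hB z)
    fun z hz ↦ fderiv_comp_sub_fderiv_comp_le hH hL hHlip hB hM hBlip (hA3 z hz)

end Descent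

/-- The generalized descent inequality used in the proof of Theorem 2.1: if `H` has an
`L`-Lipschitz gradient, the components of `B` are Lipschitz with constants `L̄ᵢ`,
`r := ∑ L̄ᵢ²`, and (A3) holds with constant `ξ ≥ 0`, then for all `y, x'` in
`span(X)`, `H(B(x')) ≤ H(B(y)) + ∇(H∘B)(y)ᵀ(x' - y) + ((rL + ξ)/2)‖x' - y‖²`. -/
theorem generalized_descent_inequality
    {n m : ℕ}
    (X : Set (EuclideanSpace ℝ (Fin n)))
    (hXclosed : IsClosed X) (hXconvex : Convex ℝ X)
    (H : EuclideanSpace ℝ (Fin m) → ℝ)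
    (hHdiff : Differentiable ℝ H)
    (L : ℝ) (hL : 0 < L)
    (hHlip : ∀ u v, ‖gradient H u - gradient H v‖ ≤ L * ‖u - v‖)
    (B : EuclideanSpace ℝ (Fin n) → EuclideanSpace ℝ (Fin m))
    (hB : Differentiable ℝ B)
    (Lbar : Fin m → ℝ) (hLbar : ∀ i, 0 ≤ Lbar i)
    (hA1lip : ∀ i, ∀ x y, |B x i - B y i| ≤ Lbar i * ‖x - y‖)
    (r : ℝ) (hr : r = ∑ i, Lbar i ^ 2)
    (ξ : ℝ) (hξ : 0 ≤ ξ)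
    (hA3 : ∀ x' ∈ Submodule.span ℝ X, ∀ x'' ∈ Submodule.span ℝ X,
      |⟪gradient H (B x'), (fderiv ℝ B x'' - fderiv ℝ B x') (x'' - x')⟫|
        ≤ ξ * ‖x'' - x'‖ ^ 2) :
    ∀ y ∈ Submodule.span ℝ X, ∀ x' ∈ Submodule.span ℝ X,
      H (B x') ≤ H (B y) + ⟪gradient (fun v => H (B v)) y, x' - y⟫
        + (r * L + ξ) / 2 * ‖x' - y‖ ^ 2 := by
  intro y hy x' hx'
  simp only [inner_gradient_left, norm_gradient_sub_gradient] at hHlip hA3 ⊢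
  rw [hr, ← Real.sq_sqrt (by positivity : 0 ≤ ∑ i, Lbar i ^ 2)]
  exact generalized_descent_inequality_general hHdiff hL.le hHlip hB (Real.sqrt_nonneg _)
    (fun u v ↦ piLp_norm_le_sqrt_sum_sq_mul (norm_nonneg _) fun i ↦ hA1lip i u v)
    fun z hz ↦ (le_abs_self _).trans
      (hA3 y hy z ((Submodule.span ℝ X).convex.segment_subset hy hx' hz))
end
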